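/- Let γ > 1 be real, let n ≥ 2 be an integer, and let w₀ be a real number with 0 < w₀ ≤ 1/(2√3) satisfying (1 − γ)·R_n(w₀) + 2·w₀²·R_n'(w₀) = 0. Then 4w₀² ≤ γ − 1, and hence −1/(2w₀) ≤ −1/√(γ−1). -/

import Mathlib

/-- `R n x = ∑_{m=0}^{n} ((n+m)! / (m! (n-m)!)) x^m`, real version. -/
noncomputable def R (n : ℕ) (x : ℝ) : ℝ :=
  ∑ m ∈ Finset.range (n + 1),
    ((Nat.factorial (n + m) : ℝ) / ((Nat.factorial m : ℝ) * (Nat.factorial (n - m) : ℝ))) * x ^ m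

/-- Coefficients of `R`. -/
noncomputable def Rc (n m : ℕ) : ℝ :=
  (Nat.factorial (n + m) : ℝ) / ((Nat.factorial m : ℝ) * (Nat.factorial (n - m) : ℝ))

lemma Rc_pos (n m : ℕ) : 0 < Rc n m := by unfold Rc; positivity

lemma Rc_succ (n m : ℕ) (h : m < n) :
    Rc n (m + 1) * ((m : ℝ) + 1) = ((n : ℝ) + m + 1) * ((n : ℝ) - m) * Rc n m := by
  obtain ⟨d, rfl⟩ : ∃ d, n = m + 1 + d := ⟨n - (m + 1), by omega⟩
  unfold Rc
  have e1 : m + 1 + d - (m + 1) = d := by omega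
  have e2 : m + 1 + d - m = d + 1 := by omega
  have e3 : m + 1 + d + (m + 1) = (m + 1 + d + m) + 1 := by omega
  rw [e1, e2, e3, Nat.factorial_succ (m + 1 + d + m), Nat.factorial_succ d, Nat.factorial_succ m]
  have h1 : (Nat.factorial m : ℝ) ≠ 0 := by positivity
  have h2 : (Nat.factorial d : ℝ) ≠ 0 := by positivity
  have h3 : (m : ℝ) + 1 ≠ 0 := by positivity
  have h4 : (d : ℝ) + 1 ≠ 0 := by positivity
  push_cast
  have h5 : (m : ℝ) + 1 + d - m = d + 1 := by ring
  rw [h5]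
  field_simp

lemma R_deriv (n : ℕ) (w : ℝ) :
    deriv (R n) w = ∑ m ∈ Finset.range n, Rc n (m + 1) * ((m : ℝ) + 1) * w ^ m := by
  have h : HasDerivAt (R n)
      (∑ m ∈ Finset.range (n + 1), Rc n m * ((m : ℝ) * w ^ (m - 1))) w := by
    unfold R
    exact HasDerivAt.fun_sum fun m _ => (hasDerivAt_pow m w).const_mul (Rc n m)
  rw [h.deriv, Finset.sum_range_succ']
  simp [mul_assoc]

lemma R_deriv_ge (n : ℕ) (hn : 2 ≤ n) (w : ℝ) (h0 : 0 < w) (h1 : w ≤ 1 / 2) :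
    2 * R n w ≤ deriv (R n) w := by
  have hR : R n w = ∑ m ∈ Finset.range n, Rc n m * w ^ m + Rc n n * w ^ n := by
    have : R n w = ∑ m ∈ Finset.range (n + 1), Rc n m * w ^ m := rfl
    rw [this, Finset.sum_range_succ]
  have hD : 4 * ∑ m ∈ Finset.range n, Rc n m * w ^ m ≤ deriv (R n) w := by
    rw [R_deriv, Finset.mul_sum]
    refine Finset.sum_le_sum fun m hm => ?_
    have hm' : m < n := Finset.mem_range.1 hm
    rw [Rc_succ n m hm', ← mul_assoc]
    have := Rc_pos n m
    have h2 : (2 : ℝ) ≤ n := by exact_mod_cast hn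
    have h3 : (m : ℝ) + 1 ≤ n := by exact_mod_cast hm'
    have h4 : (0 : ℝ) ≤ m := by positivity
    have h5 : (4 : ℝ) ≤ ((n : ℝ) + m + 1) * ((n : ℝ) - m) := by
      nlinarith [mul_nonneg (sub_nonneg.2 h3) (by positivity : (0 : ℝ) ≤ (n : ℝ) + m)]
    gcongr
  have hT : Rc n n * w ^ n ≤ ∑ m ∈ Finset.range n, Rc n m * w ^ m := by
    obtain ⟨k, rfl⟩ : ∃ k, n = k + 1 := ⟨n - 1, by omega⟩
    have hs : Rc (k + 1) k * w ^ k ≤ ∑ m ∈ Finset.range (k + 1), Rc (k + 1) m * w ^ m :=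
      Finset.single_le_sum (f := fun m => Rc (k + 1) m * w ^ m)
        (fun m _ => mul_nonneg (Rc_pos _ _).le (by positivity)) (by simp)
    refine le_trans ?_ hs
    have e := Rc_succ (k + 1) k (by omega)
    push_cast at e
    have e' : Rc (k + 1) (k + 1) = 2 * Rc (k + 1) k := by
      have hk : (k : ℝ) + 1 ≠ 0 := by positivity
      apply mul_right_cancel₀ hk
      rw [e]; ring
    rw [e', pow_succ]
    have : 0 < Rc (k + 1) k * w ^ k := mul_pos (Rc_pos _ _) (by positivity)
    nlinarith
  rw [hR]; linarith

lemma R_pos' (n : ℕ) (w : ℝ) (h0 : 0 < w) : 0 < R n w := by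
  unfold R
  exact Finset.sum_pos (fun m _ => by positivity) ⟨0, by simp⟩

/-- Estimate (4.9): if `γ > 1`, `n ≥ 2` and `0 < w₀ ≤ 1/(2√3)` is a root of
`(1 − γ) R_n(w) + 2 w² R_n'(w) = 0`, then `4w₀² ≤ γ − 1` and `−1/(2w₀) ≤ −1/√(γ−1)`. -/
theorem case_two_bound (γ : ℝ) (hγ : 1 < γ) (n : ℕ) (hn : 2 ≤ n) (w₀ : ℝ)
    (hw0 : 0 < w₀) (hw : w₀ ≤ 1 / (2 * Real.sqrt 3))
    (hroot : (1 - γ) * R n w₀ + 2 * w₀ ^ 2 * deriv (R n) w₀ = 0) :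
    4 * w₀ ^ 2 ≤ γ - 1 ∧ -1 / (2 * w₀) ≤ -1 / Real.sqrt (γ - 1) := by
  have hw' : w₀ ≤ 1 / 2 := by
    refine hw.trans ?_
    have : (1 : ℝ) ≤ Real.sqrt 3 := Real.one_le_sqrt.2 (by norm_num)
    apply one_div_le_one_div_of_le <;> linarith
  have hd := R_deriv_ge n hn w₀ hw0 hw'
  have hp := R_pos' n w₀ hw0
  have key : 4 * w₀ ^ 2 ≤ γ - 1 := by
    have h := mul_le_mul_of_nonneg_left hd (by positivity : 0 ≤ 2 * w₀ ^ 2)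
    refine le_of_mul_le_mul_right ?_ hp
    linarith
  refine ⟨key, ?_⟩
  have hs : 2 * w₀ ≤ Real.sqrt (γ - 1) := Real.le_sqrt_of_sq_le (by linarith [key, mul_pow 2 w₀ 2])
  rw [neg_div, neg_div]
  exact neg_le_neg (one_div_le_one_div_of_le (by positivity) hs)
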